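/- Any $6 \times 6$ matrix over $\mathbb{Z}$ with $\{0,1\}$ entries, columns summing to $3$, whose first four columns are (up to row permutation) the exponent vectors of $x_1x_2x_3,\ x_1x_4x_5,\ x_2x_4x_6,\ x_3x_5x_6$, has even determinant. In particular such a matrix cannot have determinant $\pm 3$. -/

import Mathlib

/-!
The four prescribed supports are the vertex stars of `K₄`, whose six edges index the rows. Every
edge lies in exactly two stars, so the first four columns add up to the constant vector `2`.
Whenever `d` divides every entry of `A *ᵥ c`, it divides every entry of
`adjugate A *ᵥ (A *ᵥ c) = det A • c`; take `d = 2` and `c` the indicator of the four columns.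
-/

section DvdDet

variable {n R : Type*} [Fintype n] [DecidableEq n] [CommRing R] {A : Matrix n n R} {d : R}

theorem dvd_det_mul_of_forall_dvd_mulVec {c : n → R} (h : ∀ i, d ∣ A.mulVec c i) (j : n) :
    d ∣ A.det * c j := by
  have adjugate_mulVec : A.adjugate.mulVec (A.mulVec c) = A.det • c := by
    rw [Matrix.mulVec_mulVec, Matrix.adjugate_mul, Matrix.smul_mulVec, Matrix.one_mulVec]
  rw [← smul_eq_mul, ← Pi.smul_apply, ← adjugate_mulVec]
  exact Finset.dvd_sum fun i _ => (h i).mul_left _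

theorem dvd_det_of_forall_dvd_sum_cols {s : Finset n} (hs : s.Nonempty)
    (h : ∀ i, d ∣ ∑ j ∈ s, A i j) : d ∣ A.det := by
  obtain ⟨j, hj⟩ := hs
  have hmulVec : ∀ i, d ∣ A.mulVec (fun k => if k ∈ s then 1 else 0) i := fun i => by
    simpa [Matrix.mulVec, dotProduct] using h i
  simpa [hj] using dvd_det_mul_of_forall_dvd_mulVec hmulVec j

end DvdDet

theorem sum_indicator_stars_eq_two {R : Type*} [AddMonoidWithOne R] (i : Fin 6) :
    (if i ∈ ({0, 1, 2} : Finset (Fin 6)) then 1 else 0) +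
      (if i ∈ ({0, 3, 4} : Finset (Fin 6)) then 1 else 0) +
      (if i ∈ ({1, 3, 5} : Finset (Fin 6)) then 1 else 0) +
      (if i ∈ ({2, 4, 5} : Finset (Fin 6)) then 1 else 0) = (2 : R) := by
  fin_cases i <;> simp [one_add_one_eq_two]

theorem even_det_special_pattern_general {R : Type*} [CommRing R] (A : Matrix (Fin 6) (Fin 6) R)
    (hσ : ∃ σ : Equiv.Perm (Fin 6),
      (∀ i, A (σ i) 0 = if i ∈ ({0, 1, 2} : Finset (Fin 6)) then 1 else 0) ∧
      (∀ i, A (σ i) 1 = if i ∈ ({0, 3, 4} : Finset (Fin 6)) then 1 else 0) ∧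
      (∀ i, A (σ i) 2 = if i ∈ ({1, 3, 5} : Finset (Fin 6)) then 1 else 0) ∧
      (∀ i, A (σ i) 3 = if i ∈ ({2, 4, 5} : Finset (Fin 6)) then 1 else 0)) :
    2 ∣ A.det := by
  obtain ⟨σ, h0, h1, h2, h3⟩ := hσ
  have row_sum (i : Fin 6) : ∑ j ∈ {0, 1, 2, 3}, A (σ i) j = 2 := by
    rw [← sum_indicator_stars_eq_two i, ← h0, ← h1, ← h2, ← h3]
    simp [add_assoc]
  refine dvd_det_of_forall_dvd_sum_cols (s := {0, 1, 2, 3}) (by simp) (σ.surjective.forall.2 ?_)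
  exact fun i => (row_sum i).symm.dvd

/-- Any `6 × 6` `{0,1}` matrix with column sums `3` whose first four columns
are, up to row permutation, the exponent vectors of
`x₁x₂x₃, x₁x₄x₅, x₂x₄x₆, x₃x₅x₆` has even determinant; in particular its
determinant is not `±3`. -/
theorem even_det_special_pattern (A : Matrix (Fin 6) (Fin 6) ℤ)
    (h01 : ∀ i j, A i j = 0 ∨ A i j = 1)
    (hcol : ∀ j, ∑ i, A i j = 3)
    (hσ : ∃ σ : Equiv.Perm (Fin 6),
      (∀ i, A (σ i) 0 = if i ∈ ({0, 1, 2} : Finset (Fin 6)) then 1 else 0) ∧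
      (∀ i, A (σ i) 1 = if i ∈ ({0, 3, 4} : Finset (Fin 6)) then 1 else 0) ∧
      (∀ i, A (σ i) 2 = if i ∈ ({1, 3, 5} : Finset (Fin 6)) then 1 else 0) ∧
      (∀ i, A (σ i) 3 = if i ∈ ({2, 4, 5} : Finset (Fin 6)) then 1 else 0)) :
    2 ∣ A.det ∧ A.det ≠ 3 ∧ A.det ≠ -3 := by
  have h_even : 2 ∣ A.det := even_det_special_pattern_general A hσ
  exact ⟨h_even, by omega, by omega⟩
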